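/- Let k ∈ ℕ, let S_1, …, S_m (m ≥ 1) be binary strings of length ℓ ≥ 1, let T' = γ(S_1)·γ(S_1)·γ(S_2)⋯γ(S_m)·1^{2k+4}·γ(S_m)·1^{2k+4}, and let c = |γ(S_1)| + 2k+4. If C is a binary string of length c that is a k-approximate seed of T' under the Hamming distance, then there exists b with 0 ≤ b < c such that the binary string S = ψ(rot_b(C)) satisfies Ham(S, S_i) ≤ k for all i = 1, …, m. -/

import Mathlib

/-- Hamming distance between two (equal-length) strings:
the number of positions where they differ. -/
def ham : List Bool → List Bool → ℕ
  | x :: U, y :: V => (if x = y then 0 else 1) + ham U V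
  | _, _ => 0

/-- The morphism `φ`: `φ(0) = 0^{2k+4} 1010 0^{2k+4}` and `φ(1) = 0^{2k+4} 1011 0^{2k+4}`,
with `0 ↦ false`, `1 ↦ true`. -/
def phi (k : ℕ) (S : List Bool) : List Bool :=
  S.flatMap fun x =>
    List.replicate (2 * k + 4) false ++ [true, false, true, x] ++
      List.replicate (2 * k + 4) false

/-- `γ(S) = 1^{2k+4} · φ(S)`. -/
def gamma (k : ℕ) (S : List Bool) : List Bool :=
  List.replicate (2 * k + 4) true ++ phi k S

/-- `ψ(U)`: the binary string of length `ℓ` whose `j`-th letter is `U[(j+1)(4k+12) - 1]`. -/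
def psi (k ℓ : ℕ) (U : List Bool) : List Bool :=
  (List.range ℓ).map fun j => U.getD ((j + 1) * (4 * k + 12) - 1) false

/-- `C` is a `k`-approximate cover of `T` under the Hamming distance: `|C| < |T|` and every
position `t` of `T` is covered by a `k`-approximate occurrence of `C` in `T`. -/
def IsApproxCover (k : ℕ) (C T : List Bool) : Prop :=
  C.length < T.length ∧
    ∀ t < T.length, ∃ i, i + C.length ≤ T.length ∧
      ham C ((T.drop i).take C.length) ≤ k ∧ i ≤ t ∧ t < i + C.length

/-- `C` is a `k`-approximate seed of `T`: `2|C| ≤ |T|` and `C` is a `k`-approximate cover of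
some superstring of `T` (a string having `T` as a factor). -/
def IsApproxSeed (k : ℕ) (C T : List Bool) : Prop :=
  2 * C.length ≤ T.length ∧ ∃ T' : List Bool, T <:+: T' ∧ IsApproxCover k C T'

open Finset

/-
Put `N = 2k + 4`. The text `T'` ends in `V V` with `V = γ(S_m) 1^N` and `|V| = |C|`, so covering the
last letter of the first `V` makes `C` `k`-close to a rotation of `V`. For `i < m`, covering a
position inside `γ(S_i)` makes `C` `k`-close to a window of `γ(S_1) γ(S_1) γ(S_2) ⋯ γ(S_m)`. This
rotation and this window therefore differ in at most `2k` places, which forces the copies of `φ` in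
them to be aligned:
* if the run `1^{2N}` of the rotation is contiguous, or a run `1^N` of it lies over code letters,
  all but three of some `N` ones meet zeros, and `N - 3 > 2k`;
* if the two copies of `φ` are shifted against each other by a nonzero distance of at most `N`, each
  of the `ℓ` blocks contributes two mismatches, and `2ℓ > 2k` unless the claim is trivial.
Undoing the rotation of `C` thus moves the letters of `C` that lie over the letters `x` of the
blocks `101x` of `φ(S_i)` to the positions read by `ψ`, and it does so for every `i` at once.
-/

section Mismatches

variable {ι κ α : Type*} [DecidableEq α]

/-- The Hamming distance of two words restricted to a finite set `s` of positions. Words are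
functions, so that their letters can be compared along arbitrary maps of positions. -/
def mismatches (s : Finset ι) (U V : ι → α) : ℕ := #{x ∈ s | U x ≠ V x}

lemma mismatches_comm (s : Finset ι) (U V : ι → α) : mismatches s U V = mismatches s V U := by
  simp only [mismatches, ne_comm]

lemma mismatches_le_card (s : Finset ι) (U V : ι → α) : mismatches s U V ≤ #s :=
  card_filter_le _ _

lemma mismatches_congr {s : Finset ι} {U U' V V' : ι → α} (hU : ∀ x ∈ s, U x = U' x)
    (hV : ∀ x ∈ s, V x = V' x) : mismatches s U V = mismatches s U' V' := by
  refine congrArg card (filter_congr fun x hx => ?_)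
  rw [hU x hx, hV x hx]

lemma mismatches_triangle_left (s : Finset ι) (U V W : ι → α) :
    mismatches s U V ≤ mismatches s W U + mismatches s W V := by
  classical
  refine le_trans (card_le_card fun x hx => ?_) (card_union_le _ _)
  simp only [mem_union, mem_filter] at hx ⊢
  by_cases hWU : W x = U x
  · exact .inr ⟨hx.1, hWU ▸ hx.2⟩
  · exact .inl ⟨hx.1, hWU⟩

lemma mismatches_le_mismatches_of_injOn {s : Finset ι} {t : Finset κ} {U V : ι → α} {U' V' : κ → α}
    (f : ι → κ) (hf : ∀ x ∈ s, f x ∈ t) (hinj : Set.InjOn f s) (hU : ∀ x ∈ s, U' (f x) = U x)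
    (hV : ∀ x ∈ s, V' (f x) = V x) : mismatches s U V ≤ mismatches t U' V' := by
  refine card_le_card_of_injOn f (fun x hx => ?_) (hinj.mono (filter_subset _ _))
  obtain ⟨hxs, hne⟩ := mem_filter.1 hx
  exact mem_filter.2 ⟨hf x hxs, by rwa [hU x hxs, hV x hxs]⟩

lemma mismatches_range_le_of_shift {m n u : ℕ} {U V U' V' : ℕ → α} (hu : u + m ≤ n)
    (hU : ∀ x < m, U' (u + x) = U x) (hV : ∀ x < m, V' (u + x) = V x) :
    mismatches (range m) U V ≤ mismatches (range n) U' V' := by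
  refine mismatches_le_mismatches_of_injOn (u + ·) (fun x hx => ?_)
    (fun x _ y _ h => Nat.add_left_cancel h) (fun x hx => hU x (mem_range.1 hx))
    (fun x hx => hV x (mem_range.1 hx))
  have := mem_range.1 hx
  exact mem_range.2 (by omega)

lemma card_le_mismatches_of_injOn {s : Finset ι} {t : Finset κ} {U V : κ → α} (f : ι → κ)
    (hf : ∀ x ∈ s, f x ∈ t) (hinj : Set.InjOn f s) (hne : ∀ x ∈ s, U (f x) ≠ V (f x)) :
    #s ≤ mismatches t U V := by
  have hall : mismatches s (U ∘ f) (V ∘ f) = #s := congrArg card (filter_true_of_mem hne)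
  exact hall ▸ mismatches_le_mismatches_of_injOn f hf hinj (fun _ _ => rfl) (fun _ _ => rfl)

end Mismatches

section Remainders

lemma mod_add_eq_or_of_lt_two_mul {x c : ℕ} (hx : x < 2 * c) :
    x < c ∧ x % c = x ∨ c ≤ x ∧ x % c + c = x := by
  rcases Nat.lt_or_ge x c with hlt | hge
  · exact .inl ⟨hlt, Nat.mod_eq_of_lt hlt⟩
  · refine .inr ⟨hge, ?_⟩
    rw [Nat.mod_eq_sub_mod hge, Nat.mod_eq_of_lt (by omega), Nat.sub_add_cancel hge]

lemma add_add_mod_of_mod_eq {c s a r z : ℕ} (hsa : (s + a) % c = r) (hz : r + z < c) :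
    (s + (a + z)) % c = r + z := by
  rw [← add_assoc, ← Nat.mod_add_mod, hsa, Nat.mod_eq_of_lt hz]

lemma add_mod_of_dvd_add {c s a b r z : ℕ} (hsa : (s + a) % c = r) (hsb : c ∣ s + b)
    (hz : r + z < c) (haz : a + z < c) : (r + z + b) % c = a + z := by
  obtain ⟨d, hd⟩ := hsb
  rw [← add_add_mod_of_mod_eq hsa hz, Nat.mod_add_mod,
    show s + (a + z) + b = a + z + c * d by omega, Nat.add_mul_mod_self_left,
    Nat.mod_eq_of_lt haz]

lemma exists_dvd_add {c s : ℕ} (hs : s < c) : ∃ b < c, c ∣ s + b := by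
  rcases Nat.eq_zero_or_pos s with rfl | hpos
  · exact ⟨0, hs, dvd_zero c⟩
  · exact ⟨c - s, by omega, by rw [Nat.add_sub_cancel' hs.le]⟩

end Remainders

-- `N` stands for `2k + 4`. These are the lengths of `φ(x)` for a letter `x`, of `γ(S)` and of
-- `γ(S) 1^N` for `|S| = ℓ`; they are notations rather than definitions for `omega` to see through.
local notation:max "blockLen" N:max => (2 * N + 4)
local notation:max "gammaLen" N:max ℓ:max => (N + ℓ * blockLen N)
local notation:max "seedLen" N:max ℓ:max => (2 * N + ℓ * blockLen N)

section Words

variable {N ℓ : ℕ}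

/-- The word `0^N 1 0 1 b 0^N` of length `2N + 4` that encodes the letter `b`; every other position
carries `0`. -/
def codeBlock (N : ℕ) (b : Bool) (y : ℕ) : Bool :=
  if y = N ∨ y = N + 2 then true else if y = N + 3 then b else false

/-- The morphism `φ`, with blocks of length `2N + 4`, applied to an infinite word `f`. -/
def codeWord (N : ℕ) (f : ℕ → Bool) (y : ℕ) : Bool :=
  codeBlock N (f (y / blockLen N)) (y % blockLen N)

/-- The infinite word `1^a φ(f₀ ⋯ f_{ℓ-1}) 1 1 1 ⋯`; for `a = N` it begins with `γ(f₀ ⋯ f_{ℓ-1})`.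
The seed is compared with its prefixes of length `seedLen N ℓ`. -/
def paddedWord (a N ℓ : ℕ) (f : ℕ → Bool) (x : ℕ) : Bool :=
  if a ≤ x ∧ x < a + ℓ * blockLen N then codeWord N f (x - a) else true

/-- The infinite word `γ(F₀) γ(F₁) γ(F₂) ⋯`, each string `F_q` being truncated to length `ℓ`; the
seeded text begins with such a word. -/
def textWord (N ℓ : ℕ) (F : ℕ → ℕ → Bool) (p : ℕ) : Bool :=
  paddedWord N N ℓ (F (p / gammaLen N ℓ)) (p % gammaLen N ℓ)

lemma codeBlock_eq_true {b : Bool} {y : ℕ} (hy : y = N ∨ y = N + 2) : codeBlock N b y = true :=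
  if_pos hy

lemma codeBlock_eq_false {b : Bool} {y : ℕ} (hy : y < N ∨ y = N + 1 ∨ N + 4 ≤ y) :
    codeBlock N b y = false := by
  rw [codeBlock, if_neg (by omega), if_neg (by omega)]

lemma codeBlock_data (b : Bool) : codeBlock N b (N + 3) = b := by
  simp [codeBlock]

lemma codeWord_mul_add (f : ℕ → Bool) (j : ℕ) {y : ℕ} (hy : y < blockLen N) :
    codeWord N f (j * blockLen N + y) = codeBlock N (f j) y := by
  obtain ⟨hdiv, hmod⟩ := (Nat.div_mod_unique (by omega)).2
    ⟨show y + blockLen N * j = j * blockLen N + y by ring, hy⟩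
  rw [codeWord, hdiv, hmod]

lemma codeWord_data (f : ℕ → Bool) (j : ℕ) : codeWord N f (j * blockLen N + (N + 3)) = f j := by
  rw [codeWord_mul_add f j (by omega), codeBlock_data]

lemma paddedWord_add {a : ℕ} {f : ℕ → Bool} {y : ℕ} (hy : y < ℓ * blockLen N) :
    paddedWord a N ℓ f (a + y) = codeWord N f y := by
  rw [paddedWord, if_pos (by omega), Nat.add_sub_cancel_left]

lemma paddedWord_eq_true {a : ℕ} {f : ℕ → Bool} {x : ℕ} (hx : x < a ∨ a + ℓ * blockLen N ≤ x) :
    paddedWord a N ℓ f x = true :=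
  if_neg (by omega)

lemma textWord_mul_add (F : ℕ → ℕ → Bool) (q : ℕ) {x : ℕ} (hx : x < gammaLen N ℓ) :
    textWord N ℓ F (q * gammaLen N ℓ + x) = paddedWord N N ℓ (F q) x := by
  obtain ⟨hdiv, hmod⟩ := (Nat.div_mod_unique (by omega)).2
    ⟨show x + gammaLen N ℓ * q = q * gammaLen N ℓ + x by ring, hx⟩
  rw [textWord, hdiv, hmod]

lemma textWord_code (F : ℕ → ℕ → Bool) (q : ℕ) {y : ℕ} (hy : y < ℓ * blockLen N) :
    textWord N ℓ F (q * gammaLen N ℓ + (N + y)) = codeWord N (F q) y := by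
  rw [textWord_mul_add F q (by omega), paddedWord_add hy]

lemma textWord_eq_false_of_near_pad (hℓ : 0 < ℓ) (F : ℕ → ℕ → Bool) (q : ℕ) {y : ℕ}
    (hy : y < N ∨ ℓ * blockLen N ≤ y + N ∧ y < ℓ * blockLen N) :
    textWord N ℓ F (q * gammaLen N ℓ + (N + y)) = false := by
  obtain ⟨n, rfl⟩ := Nat.exists_eq_add_one.2 hℓ
  have hsucc := Nat.add_one_mul n (blockLen N)
  rw [textWord_code (N := N) F q (by omega)]
  rcases hy with hy | hy
  · simpa using (codeWord_mul_add (F q) 0 (by omega)).trans (codeBlock_eq_false (.inl hy))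
  · obtain ⟨z, rfl⟩ : ∃ z, y = n * blockLen N + z := ⟨y - n * blockLen N, by omega⟩
    rw [codeWord_mul_add _ _ (by omega), codeBlock_eq_false (by omega)]

-- A window of length `N` is shorter than a block, so it meets each of the three residues modulo the
-- block length that may carry a `1` at most once.
lemma le_mismatches_true_codeWord (f : ℕ → Bool) (v : ℕ) :
    N ≤ mismatches (range N) (fun _ => true) (fun z => codeWord N f (v + z)) + 3 := by
  have hones : #{z ∈ range N | ¬ true ≠ codeWord N f (v + z)} ≤ 3 := by
    refine (card_le_card_of_injOn (fun z => (v + z) % blockLen N) (t := {N, N + 2, N + 3})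
      (fun z hz => ?_) (fun z hz w hw hzw => ?_)).trans card_le_three
    · have hone : codeBlock N _ ((v + z) % blockLen N) = true :=
        (not_not.1 (mem_filter.1 hz).2).symm
      by_contra hres
      simp only [coe_insert, coe_singleton, Set.mem_insert_iff, Set.mem_singleton_iff] at hres
      rw [codeBlock_eq_false (by omega)] at hone
      exact Bool.false_ne_true hone
    · have hz := mem_range.1 (mem_filter.1 hz).1
      have hw := mem_range.1 (mem_filter.1 hw).1
      exact (Nat.ModEq.add_left_cancel' v hzw).eq_of_lt_of_lt (by omega) (by omega)
  have hsum := card_filter_add_card_filter_not (s := range N)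
    fun z => true ≠ codeWord N f (v + z)
  rw [card_range] at hsum
  rw [mismatches]
  omega

lemma exists_pair_codeBlock_ne_shift {δ : ℕ} (hδ : 0 < δ) (hδN : δ ≤ N) :
    ∃ y₁ y₂, y₁ < y₂ ∧ y₂ + δ < blockLen N ∧
      ∀ y ∈ ({y₁, y₂} : Finset ℕ), ∀ b b', codeBlock N b y ≠ codeBlock N b' (y + δ) := by
  rcases Nat.lt_or_ge 1 δ with hδ1 | hδ1
  · refine ⟨N - δ, N + 2, by omega, by omega, fun y hy b b' => ?_⟩
    rcases mem_insert.1 hy with rfl | hy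
    · rw [codeBlock_eq_false (by omega), codeBlock_eq_true (by omega)]
      exact Bool.false_ne_true
    · rw [mem_singleton.1 hy, codeBlock_eq_true (by omega), codeBlock_eq_false (by omega)]
      exact Bool.false_ne_true.symm
  · refine ⟨N, N + 1, by omega, by omega, fun y hy b b' => ?_⟩
    rcases mem_insert.1 hy with rfl | hy
    · rw [codeBlock_eq_true (by omega), codeBlock_eq_false (by omega)]
      exact Bool.false_ne_true.symm
    · rw [mem_singleton.1 hy, codeBlock_eq_false (by omega), codeBlock_eq_true (by omega)]
      exact Bool.false_ne_true

lemma two_mul_le_mismatches_codeWord_shift {δ : ℕ} (hδ : 0 < δ) (hδN : δ ≤ N) (ℓ : ℕ)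
    (f f' : ℕ → Bool) :
    2 * ℓ ≤ mismatches (range (ℓ * blockLen N - δ)) (codeWord N f)
      (fun y => codeWord N f' (y + δ)) := by
  obtain ⟨y₁, y₂, hlt, hy₂, hne⟩ := exists_pair_codeBlock_ne_shift hδ hδN
  have hcard : #(range ℓ ×ˢ ({y₁, y₂} : Finset ℕ)) = 2 * ℓ := by
    rw [card_product, card_range, card_pair hlt.ne, mul_comm]
  have hbound : ∀ y ∈ ({y₁, y₂} : Finset ℕ), y + δ < blockLen N := by
    simp only [mem_insert, mem_singleton]
    omega
  rw [← hcard]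
  refine card_le_mismatches_of_injOn (fun z => z.1 * blockLen N + z.2) ?_ ?_ ?_
  · rintro ⟨j, y⟩ hz
    obtain ⟨hj, hy⟩ := mem_product.1 hz
    have hjℓ : (j + 1) * blockLen N ≤ ℓ * blockLen N := Nat.mul_le_mul_right _ (mem_range.1 hj)
    have := hbound y hy
    rw [Nat.add_one_mul] at hjℓ
    exact mem_range.2 (by simp only; omega)
  · rintro ⟨j, y⟩ hz ⟨j', y'⟩ hz' heq
    have hy := hbound y (mem_product.1 hz).2
    have hy' := hbound y' (mem_product.1 hz').2
    obtain ⟨hdiv, hmod⟩ := (Nat.div_mod_unique (c := y) (d := j) (by omega)).2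
      ⟨show y + blockLen N * j = j * blockLen N + y by ring, by omega⟩
    obtain ⟨hdiv', hmod'⟩ := (Nat.div_mod_unique (c := y') (d := j') (by omega)).2
      ⟨show y' + blockLen N * j' = j' * blockLen N + y' by ring, by omega⟩
    simp only at heq
    rw [← heq] at hdiv' hmod'
    exact Prod.ext (hdiv.symm.trans hdiv') (hmod.symm.trans hmod')
  · rintro ⟨j, y⟩ hz
    have hy := (mem_product.1 hz).2
    have := hbound y hy
    simp only [add_assoc]
    rw [codeWord_mul_add f j (by omega), codeWord_mul_add f' j (by omega)]
    exact hne y hy _ _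

lemma le_mismatches_of_ones_over_code {n u i q v : ℕ} {D : ℕ → Bool} {F : ℕ → ℕ → Bool}
    (hun : u + N ≤ n) (hD : ∀ x < N, D (u + x) = true)
    (hiu : i + u = q * gammaLen N ℓ + (N + v)) (hv : v + N ≤ ℓ * blockLen N) :
    N ≤ mismatches (range n) D (fun x => textWord N ℓ F (i + x)) + 3 := by
  refine (le_mismatches_true_codeWord (F q) v).trans (Nat.add_le_add_right ?_ 3)
  refine mismatches_range_le_of_shift hun hD fun x hx => ?_
  rw [← textWord_code (N := N) (ℓ := ℓ) F q (by omega)]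
  congr 1
  omega

lemma le_mismatches_of_ones_across_pad (hℓ : 0 < ℓ) {n w i q y : ℕ} {D : ℕ → Bool}
    {F : ℕ → ℕ → Bool} (hwn : w + 2 * N ≤ n) (hD : ∀ x < 2 * N, D (w + x) = true)
    (hiw : i + w = q * gammaLen N ℓ + (N + y))
    (hy : ℓ * blockLen N < y + N) (hyℓ : y < ℓ * blockLen N) :
    N ≤ mismatches (range n) D (fun x => textWord N ℓ F (i + x)) := by
  have hsucc := Nat.add_one_mul q (gammaLen N ℓ)
  -- Skip the pad: the `N` positions on its two sides carry zeros.
  conv_lhs => rw [← card_range N]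
  refine card_le_mismatches_of_injOn
    (fun z => if y + z < ℓ * blockLen N then w + z else w + (z + N)) ?_ ?_ ?_
  · intro z hz
    have := mem_range.1 hz
    exact mem_range.2 (by split_ifs <;> omega)
  · intro z hz z' hz' heq
    have := mem_range.1 hz
    have := mem_range.1 hz'
    simp only at heq
    split_ifs at heq <;> omega
  · intro z hz
    have := mem_range.1 hz
    by_cases hleft : y + z < ℓ * blockLen N
    · have hzero := textWord_eq_false_of_near_pad (N := N) hℓ F q (y := y + z) (by omega)
      rw [if_pos hleft, hD z (by omega),
        show i + (w + z) = q * gammaLen N ℓ + (N + (y + z)) by omega, hzero]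
      exact Bool.false_ne_true.symm
    · have hzero := textWord_eq_false_of_near_pad (N := N) hℓ F (q + 1)
        (y := y + z - ℓ * blockLen N) (by omega)
      rw [if_neg hleft, hD (z + N) (by omega), show i + (w + (z + N)) = (q + 1) *
        gammaLen N ℓ + (N + (y + z - ℓ * blockLen N)) by omega, hzero]
      exact Bool.false_ne_true.symm

-- The text has runs of ones of length `N` only, so a run of length `2N` meets many zeros.
lemma le_mismatches_of_long_run_ones (hℓ : 0 < ℓ) {n w : ℕ} (i : ℕ) {D : ℕ → Bool}
    (F : ℕ → ℕ → Bool) (hwn : w + 2 * N ≤ n) (hD : ∀ x < 2 * N, D (w + x) = true) :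
    N ≤ mismatches (range n) D (fun x => textWord N ℓ F (i + x)) + 3 := by
  have hblock : blockLen N ≤ ℓ * blockLen N := Nat.le_mul_of_pos_left _ hℓ
  set q := (i + w) / gammaLen N ℓ
  obtain ⟨ρ, hiw, hρ⟩ : ∃ ρ, i + w = q * gammaLen N ℓ + ρ ∧ ρ < gammaLen N ℓ :=
    ⟨_, (Nat.div_add_mod' _ _).symm, Nat.mod_lt _ (by omega)⟩
  rcases Nat.lt_or_ge ρ N with hpad | hcode
  · exact le_mismatches_of_ones_over_code (u := w + N) (q := q) (v := ρ) (by omega)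
      (fun x hx => by rw [add_assoc, hD _ (by omega)]) (by omega) (by omega)
  obtain ⟨y, rfl⟩ := Nat.exists_eq_add_of_le hcode
  rcases Nat.lt_or_ge (ℓ * blockLen N) (y + N) with hcross | hinside
  · have := le_mismatches_of_ones_across_pad (F := F) hℓ hwn hD hiw hcross (by omega)
    omega
  · exact le_mismatches_of_ones_over_code (u := w) (by omega) (fun x hx => hD x (by omega)) hiw
      hinside

lemma two_mul_le_mismatches_of_lt_pad {a i q ρ : ℕ} {f : ℕ → Bool} {F : ℕ → ℕ → Bool}
    (ha : a ≤ 2 * N) (hia : i + a = q * gammaLen N ℓ + ρ) (hρ : ρ < N) :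
    2 * ℓ ≤ mismatches (range (seedLen N ℓ)) (paddedWord a N ℓ f)
      (fun x => textWord N ℓ F (i + x)) := by
  rcases Nat.eq_zero_or_pos ℓ with rfl | hℓ
  · exact Nat.zero_le _
  have hblock : blockLen N ≤ ℓ * blockLen N := Nat.le_mul_of_pos_left _ hℓ
  refine (two_mul_le_mismatches_codeWord_shift (N := N) (δ := N - ρ) (by omega) (by omega) ℓ
    (F q) f).trans ?_
  rw [mismatches_comm]
  refine mismatches_range_le_of_shift (u := a + (N - ρ)) (by omega) (fun y hy => ?_)
    (fun y hy => ?_)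
  · rw [← paddedWord_add (N := N) (a := a) (ℓ := ℓ) (by omega), add_assoc, add_comm y]
  · rw [← textWord_code (N := N) (ℓ := ℓ) F q (by omega)]
    congr 1
    omega

lemma two_mul_le_mismatches_of_gt_pad {a i q ρ : ℕ} {f : ℕ → Bool} {F : ℕ → ℕ → Bool}
    (ha : a ≤ 2 * N) (hia : i + a = q * gammaLen N ℓ + ρ) (hρ : N < ρ)
    (hρ' : ρ ≤ 2 * N) :
    2 * ℓ ≤ mismatches (range (seedLen N ℓ)) (paddedWord a N ℓ f)
      (fun x => textWord N ℓ F (i + x)) := by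
  refine (two_mul_le_mismatches_codeWord_shift (N := N) (δ := ρ - N) (by omega) (by omega) ℓ f
    (F q)).trans ?_
  refine mismatches_range_le_of_shift (u := a) (by omega) (fun y hy => ?_) (fun y hy => ?_)
  · exact paddedWord_add (by omega)
  · rw [← textWord_code (N := N) (ℓ := ℓ) F q (by omega)]
    congr 1
    omega

lemma le_mismatches_of_two_mul_lt {a i q ρ : ℕ} {f : ℕ → Bool} {F : ℕ → ℕ → Bool}
    (ha : a ≤ 2 * N) (hia : i + a = q * gammaLen N ℓ + ρ) (hρ : 2 * N < ρ)
    (hρ' : ρ < gammaLen N ℓ) :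
    N ≤ mismatches (range (seedLen N ℓ)) (paddedWord a N ℓ f)
      (fun x => textWord N ℓ F (i + x)) + 3 := by
  have hsucc := Nat.add_one_mul q (gammaLen N ℓ)
  rcases Nat.lt_or_ge a N with haN | haN
  · exact le_mismatches_of_ones_over_code (u := a + ℓ * blockLen N) (q := q + 1) (v := ρ - 2 * N)
      (by omega) (fun x _ => paddedWord_eq_true (by omega)) (by omega) (by omega)
  · exact le_mismatches_of_ones_over_code (u := a - N) (q := q) (v := ρ - 2 * N)
      (by omega) (fun x hx => paddedWord_eq_true (by omega)) (by omega) (by omega)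

lemma mod_eq_pad_of_mismatches_lt {a i : ℕ} {f : ℕ → Bool} {F : ℕ → ℕ → Bool} (ha : a ≤ 2 * N)
    (hshift : mismatches (range (seedLen N ℓ)) (paddedWord a N ℓ f)
      (fun x => textWord N ℓ F (i + x)) < 2 * ℓ)
    (hrun : mismatches (range (seedLen N ℓ)) (paddedWord a N ℓ f)
      (fun x => textWord N ℓ F (i + x)) + 3 < N) :
    (i + a) % gammaLen N ℓ = N := by
  have hia := (Nat.div_add_mod' (i + a) (gammaLen N ℓ)).symm
  by_contra hne
  rcases Nat.lt_or_gt_of_ne hne with hlt | hgt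
  · exact hshift.not_ge (two_mul_le_mismatches_of_lt_pad ha hia hlt)
  rcases Nat.lt_or_ge (2 * N) ((i + a) % gammaLen N ℓ) with hfar | hnear
  · exact hrun.not_ge (le_mismatches_of_two_mul_lt ha hia hfar (Nat.mod_lt _ (by omega)))
  · exact hshift.not_ge (two_mul_le_mismatches_of_gt_pad ha hia hgt hnear)

lemma paddedWord_rotate {a s y : ℕ} (f : ℕ → Bool) (ha : a ≤ 2 * N)
    (hs : s < seedLen N ℓ) (hsa : (s + a) % seedLen N ℓ = N)
    (hy : y < seedLen N ℓ) :
    paddedWord N N ℓ f ((s + y) % seedLen N ℓ) = paddedWord a N ℓ f y := by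
  by_cases hcode : a ≤ y ∧ y < a + ℓ * blockLen N
  · obtain ⟨z, rfl⟩ := Nat.exists_eq_add_of_le hcode.1
    rw [add_add_mod_of_mod_eq hsa (by omega), paddedWord_add (by omega), paddedWord_add (by omega)]
  · rw [paddedWord_eq_true (a := a) (by omega), paddedWord_eq_true]
    have hmod := mod_add_eq_or_of_lt_two_mul (show s + y < 2 * seedLen N ℓ by omega)
    by_cases hℓ : ℓ * blockLen N = 0
    · omega
    have hmod' := mod_add_eq_or_of_lt_two_mul (show s + a < 2 * seedLen N ℓ by omega)
    omega

-- A rotation of `1^N φ(f) 1^N` either contains the run `1^{2N}` contiguously, which the text does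
-- not tolerate, or has the form `1^a φ(f) 1^{2N-a}`.
lemma exists_alignment_of_mismatches_lt {i s : ℕ} {f : ℕ → Bool} {F : ℕ → ℕ → Bool}
    (hs : s < seedLen N ℓ)
    (hshift : mismatches (range (seedLen N ℓ))
      (fun y => paddedWord N N ℓ f ((s + y) % seedLen N ℓ))
      (fun y => textWord N ℓ F (i + y)) < 2 * ℓ)
    (hrun : mismatches (range (seedLen N ℓ))
      (fun y => paddedWord N N ℓ f ((s + y) % seedLen N ℓ))
      (fun y => textWord N ℓ F (i + y)) + 3 < N) :
    ∃ a ≤ 2 * N, (s + a) % seedLen N ℓ = N ∧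
      (i + a) % gammaLen N ℓ = N := by
  have hcut : s ≤ N ∨ gammaLen N ℓ ≤ s := by
    by_contra! hmid
    refine hrun.not_ge (le_mismatches_of_long_run_ones (w := gammaLen N ℓ - s) (by omega) i F
      (by omega) fun x hx => paddedWord_eq_true ?_)
    have := mod_add_eq_or_of_lt_two_mul (x := s + (gammaLen N ℓ - s + x))
      (c := seedLen N ℓ) (by omega)
    omega
  obtain ⟨a, ha, hsa⟩ : ∃ a ≤ 2 * N, (s + a) % seedLen N ℓ = N := by
    rcases hcut with hle | hge
    · exact ⟨N - s, by omega, by rw [Nat.add_sub_cancel' hle, Nat.mod_eq_of_lt (by omega)]⟩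
    · refine ⟨3 * N + ℓ * blockLen N - s, by omega, ?_⟩
      rw [show s + (3 * N + ℓ * blockLen N - s) = N + seedLen N ℓ by omega,
        Nat.add_mod_right, Nat.mod_eq_of_lt (by omega)]
  rw [mismatches_congr (fun y hy => paddedWord_rotate f ha hs hsa (mem_range.1 hy))
    (fun _ _ => rfl)] at hshift hrun
  exact ⟨a, ha, hsa, mod_eq_pad_of_mismatches_lt ha hshift hrun⟩

lemma add_eq_mul_add_of_covers {i a q : ℕ} (hℓ : 0 < ℓ) (ha : a ≤ 2 * N)
    (hia : (i + a) % gammaLen N ℓ = N)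
    (hle : i ≤ q * gammaLen N ℓ + 2 * N)
    (hlt : q * gammaLen N ℓ + 2 * N < i + seedLen N ℓ) :
    i + a = q * gammaLen N ℓ + N := by
  have hblock : blockLen N ≤ ℓ * blockLen N := Nat.le_mul_of_pos_left _ hℓ
  obtain ⟨p, hp⟩ : ∃ p, i + a = p * gammaLen N ℓ + N :=
    ⟨_, hia ▸ (Nat.div_add_mod' (i + a) (gammaLen N ℓ)).symm⟩
  have hpq : p < q + 1 := Nat.lt_of_mul_lt_mul_right (a := gammaLen N ℓ)
    (by rw [Nat.add_one_mul q]; omega)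
  have hqp : q < p + 1 := Nat.lt_of_mul_lt_mul_right (a := gammaLen N ℓ)
    (by rw [Nat.add_one_mul p]; omega)
  rw [hp, show p = q by omega]

/-- The position, in `1^N φ(f)`, of the letter that encodes the `j`-th letter of `f`; these are the
positions read by `ψ`. -/
def dataPosition (N j : ℕ) : ℕ := N + (j * blockLen N + (N + 3))

lemma dataPosition_lt {j : ℕ} (hj : j < ℓ) : dataPosition N j < gammaLen N ℓ := by
  have hmul : (j + 1) * blockLen N ≤ ℓ * blockLen N := Nat.mul_le_mul_right _ hj
  rw [Nat.add_one_mul] at hmul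
  rw [dataPosition]
  omega

lemma dataPosition_injective : Function.Injective (dataPosition N) := fun j j' h => by
  simp only [dataPosition] at h
  exact Nat.eq_of_mul_eq_mul_right (show 0 < blockLen N by omega) (by omega)

lemma paddedWord_dataPosition (f : ℕ → Bool) {j : ℕ} (hj : j < ℓ) :
    paddedWord N N ℓ f (dataPosition N j) = f j := by
  have := dataPosition_lt (N := N) hj
  rw [dataPosition] at this ⊢
  rw [paddedWord_add (by omega), codeWord_data]

lemma textWord_dataPosition_of_close {C f : ℕ → Bool} {F : ℕ → ℕ → Bool} {k i s b q j : ℕ}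
    (hkN : 2 * k + 3 < N) (hkℓ : k < ℓ) (hs : s < seedLen N ℓ)
    (hsb : seedLen N ℓ ∣ s + b)
    (hf : mismatches (range (seedLen N ℓ)) C
      (fun y => paddedWord N N ℓ f ((s + y) % seedLen N ℓ)) ≤ k)
    (hF : mismatches (range (seedLen N ℓ)) C (fun y => textWord N ℓ F (i + y)) ≤ k)
    (hle : i ≤ q * gammaLen N ℓ + 2 * N)
    (hlt : q * gammaLen N ℓ + 2 * N < i + seedLen N ℓ) (hj : j < ℓ) :
    textWord N ℓ F (i + (dataPosition N j + b) % seedLen N ℓ) = F q j := by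
  have hclose := mismatches_triangle_left (range (seedLen N ℓ))
    (fun y => paddedWord N N ℓ f ((s + y) % seedLen N ℓ))
    (fun y => textWord N ℓ F (i + y)) C
  obtain ⟨a, ha, hsa, hia⟩ :=
    exists_alignment_of_mismatches_lt (i := i) (f := f) (F := F) hs (by omega) (by omega)
  have hiq := add_eq_mul_add_of_covers (by omega) ha hia hle hlt
  have hpos := dataPosition_lt (N := N) hj
  obtain ⟨y, hy⟩ : ∃ y, dataPosition N j = N + y := ⟨_, rfl⟩
  rw [← paddedWord_dataPosition (N := N) (F q) hj, ← textWord_mul_add F q hpos]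
  rw [hy] at hpos ⊢
  rw [add_mod_of_dvd_add hsa hsb (by omega) (by omega)]
  congr 1
  omega

end Words

section Strings

lemma ham_eq_mismatches {U V : List Bool} (h : U.length = V.length) :
    ham U V = mismatches (range U.length) (fun x => U.getD x false) (fun x => V.getD x false) := by
  induction U generalizing V with
  | nil => cases V <;> simp [ham, mismatches]
  | cons a U ih =>
    obtain _ | ⟨b, V⟩ := V
    · simp at h
    · have htail := ih (V := V) (by simpa using h)
      rw [mismatches, card_filter] at htail ⊢
      rw [ham, htail, List.length_cons, sum_range_succ', add_comm]
      simp only [List.getD_cons_succ, List.getD_cons_zero, ite_not]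

lemma getD_drop_append_take {α : Type*} (C : List α) (d : α) {b x : ℕ} (hb : b ≤ C.length)
    (hx : x < C.length) :
    (C.drop b ++ C.take b).getD x d = C.getD ((x + b) % C.length) d := by
  rw [← List.rotate_eq_drop_append_take hb, List.getD_eq_getElem _ _ (by simpa using hx),
    List.getElem_rotate, List.getD_eq_getElem]

lemma getD_flatten_of_length_eq {α : Type*} {A : List (List α)} {n : ℕ}
    (hA : ∀ S ∈ A, S.length = n) (d : α) {q x : ℕ} (hx : x < n) :
    A.flatten.getD (q * n + x) d = (A.getD q []).getD x d := by
  induction A generalizing q with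
  | nil => simp
  | cons S A ih =>
    obtain ⟨hS, hA⟩ := List.forall_mem_cons.1 hA
    rw [List.flatten_cons]
    cases q with
    | zero => rw [zero_mul, zero_add, List.getD_append _ _ _ _ (by omega), List.getD_cons_zero]
    | succ q =>
      rw [List.getD_cons_succ, ← ih hA, Nat.add_one_mul,
        List.getD_append_right _ _ _ _ (by omega)]
      congr 1
      omega

lemma length_flatten_of_length_eq {α : Type*} {A : List (List α)} {n : ℕ}
    (hA : ∀ S ∈ A, S.length = n) : A.flatten.length = A.length * n := by
  rw [List.length_flatten, List.sum_eq_card_nsmul _ n (by simpa using hA), List.length_map,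
    smul_eq_mul]

lemma length_block (N : ℕ) (b : Bool) :
    (List.replicate N false ++ [true, false, true, b] ++ List.replicate N false).length =
      blockLen N := by
  simp only [List.length_append, List.length_replicate, List.length_cons, List.length_nil]
  omega

lemma getD_block (N : ℕ) (b : Bool) (y : ℕ) :
    (List.replicate N false ++ [true, false, true, b] ++ List.replicate N false).getD y false =
      codeBlock N b y := by
  rw [List.append_assoc]
  rcases Nat.lt_or_ge y N with hy | hy
  · rw [List.getD_append _ _ _ _ (by simpa using hy), List.getD_replicate _ hy,
      codeBlock_eq_false (.inl hy)]
  obtain ⟨z, rfl⟩ := Nat.exists_eq_add_of_le hy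
  rw [List.getD_append_right _ _ _ _ (by simp), List.length_replicate, Nat.add_sub_cancel_left]
  match z with
  | 0 | 1 | 2 | 3 => simp [codeBlock]
  | z + 4 =>
    rw [codeBlock_eq_false (by omega)]
    rcases Nat.lt_or_ge z N with hz | hz <;> simp [hz]

lemma phi_eq_flatten (k : ℕ) (S : List Bool) :
    phi k S = (S.map fun b => List.replicate (2 * k + 4) false ++ [true, false, true, b] ++
      List.replicate (2 * k + 4) false).flatten :=
  List.flatMap_def ..

lemma length_phi (k : ℕ) (S : List Bool) :
    (phi k S).length = S.length * blockLen (2 * k + 4) := by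
  rw [phi_eq_flatten, length_flatten_of_length_eq (n := blockLen (2 * k + 4)), List.length_map]
  exact List.forall_mem_map.2 fun b _ => length_block _ b

lemma length_gamma (k : ℕ) (S : List Bool) :
    (gamma k S).length = gammaLen (2 * k + 4) S.length := by
  rw [gamma, List.length_append, List.length_replicate, length_phi]

lemma getD_phi {k : ℕ} {S : List Bool} {y : ℕ} (hy : y < S.length * blockLen (2 * k + 4)) :
    (phi k S).getD y false = codeWord (2 * k + 4) (fun j => S.getD j false) y := by
  have hj : y / blockLen (2 * k + 4) < S.length := (Nat.div_lt_iff_lt_mul (by omega)).2 hy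
  conv_lhs => rw [← Nat.div_add_mod' y (blockLen (2 * k + 4))]
  rw [phi_eq_flatten, getD_flatten_of_length_eq _ _ (Nat.mod_lt _ (by omega)),
    List.getD_eq_getElem _ [] (by simpa using hj), List.getElem_map, getD_block, codeWord,
    List.getD_eq_getElem _ _ hj]
  exact List.forall_mem_map.2 fun b _ => length_block _ b

lemma getD_gamma_append_ones {k : ℕ} {S : List Bool} {x : ℕ}
    (hx : x < seedLen (2 * k + 4) S.length) :
    (gamma k S ++ List.replicate (2 * k + 4) true).getD x false =
      paddedWord (2 * k + 4) (2 * k + 4) S.length (fun j => S.getD j false) x := by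
  have hphi := length_phi k S
  rw [gamma, List.append_assoc]
  rcases Nat.lt_or_ge x (2 * k + 4) with hpad | hge
  · rw [List.getD_append _ _ _ _ (by simpa using hpad), List.getD_replicate _ hpad,
      paddedWord_eq_true (.inl hpad)]
  obtain ⟨y, rfl⟩ := Nat.exists_eq_add_of_le hge
  rw [List.getD_append_right _ _ _ _ (by simp), List.length_replicate, Nat.add_sub_cancel_left]
  rcases Nat.lt_or_ge y (S.length * blockLen (2 * k + 4)) with hcode | hpad
  · rw [List.getD_append _ _ _ _ (by omega), getD_phi hcode, paddedWord_add hcode]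
  · rw [List.getD_append_right _ _ _ _ (by omega), List.getD_replicate _ (by omega),
      paddedWord_eq_true (by omega)]

lemma getD_gamma {k : ℕ} {S : List Bool} {x : ℕ} (hx : x < gammaLen (2 * k + 4) S.length) :
    (gamma k S).getD x false =
      paddedWord (2 * k + 4) (2 * k + 4) S.length (fun j => S.getD j false) x := by
  rw [← getD_gamma_append_ones (by omega), List.getD_append _ _ _ _ (by rwa [length_gamma])]

lemma getD_flatten_map_gamma {k ℓ : ℕ} {A : List (List Bool)} (hA : ∀ S ∈ A, S.length = ℓ) {p : ℕ}
    (hp : p < A.length * gammaLen (2 * k + 4) ℓ) :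
    (A.map (gamma k)).flatten.getD p false =
      textWord (2 * k + 4) ℓ (fun q j => (A.getD q []).getD j false) p := by
  have hq : p / gammaLen (2 * k + 4) ℓ < A.length := (Nat.div_lt_iff_lt_mul (by omega)).2 hp
  have hr : p % gammaLen (2 * k + 4) ℓ < gammaLen (2 * k + 4) ℓ := Nat.mod_lt _ (by omega)
  have hlen : A[p / gammaLen (2 * k + 4) ℓ].length = ℓ := hA _ (List.getElem_mem hq)
  have hgamma : ∀ S ∈ A.map (gamma k), S.length = gammaLen (2 * k + 4) ℓ :=
    List.forall_mem_map.2 fun S hS => by rw [length_gamma, hA S hS]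
  conv_lhs => rw [← Nat.div_add_mod' p (gammaLen (2 * k + 4) ℓ)]
  rw [getD_flatten_of_length_eq hgamma _ hr, List.getD_eq_getElem _ [] (by simpa using hq),
    List.getElem_map, getD_gamma (by rwa [hlen]), textWord, List.getD_eq_getElem _ _ hq, hlen]

lemma length_psi (k ℓ : ℕ) (U : List Bool) : (psi k ℓ U).length = ℓ := by
  rw [psi, List.length_map, List.length_range]

lemma getD_psi {k ℓ j : ℕ} (U : List Bool) (hj : j < ℓ) :
    (psi k ℓ U).getD j false = U.getD (dataPosition (2 * k + 4) j) false := by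
  have hindex : (j + 1) * (4 * k + 12) - 1 = dataPosition (2 * k + 4) j := by
    rw [dataPosition, Nat.add_one_mul, show 4 * k + 12 = blockLen (2 * k + 4) by ring]
    omega
  rw [psi, List.getD_eq_getElem _ _ (by simpa using hj), List.getElem_map, List.getElem_range,
    hindex]

lemma ham_psi_eq_mismatches {k ℓ : ℕ} (U : List Bool) {S : List Bool} (hS : S.length = ℓ) :
    ham (psi k ℓ U) S = mismatches (range ℓ)
      (fun j => U.getD (dataPosition (2 * k + 4) j) false) (fun j => S.getD j false) := by
  rw [ham_eq_mismatches ((length_psi k ℓ U).trans hS.symm), length_psi]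
  exact mismatches_congr (fun j hj => getD_psi U (mem_range.1 hj)) (fun _ _ => rfl)

lemma ham_psi_le {k ℓ : ℕ} (U : List Bool) {S : List Bool} (hS : S.length = ℓ) :
    ham (psi k ℓ U) S ≤ ℓ := by
  rw [ham_psi_eq_mismatches U hS]
  exact (mismatches_le_card _ _ _).trans_eq (card_range ℓ)

lemma ham_psi_rotate_le {k ℓ b : ℕ} {C S : List Bool} {V : ℕ → Bool}
    (hC : C.length = seedLen (2 * k + 4) ℓ) (hb : b ≤ C.length) (hS : S.length = ℓ)
    (hV : ∀ j < ℓ, V ((dataPosition (2 * k + 4) j + b) % C.length) = S.getD j false) :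
    ham (psi k ℓ (C.drop b ++ C.take b)) S ≤
      mismatches (range C.length) (fun x => C.getD x false) V := by
  have hpos : ∀ j < ℓ, dataPosition (2 * k + 4) j < C.length := fun j hj => by
    have := dataPosition_lt (N := 2 * k + 4) hj
    omega
  rw [ham_psi_eq_mismatches _ hS]
  refine mismatches_le_mismatches_of_injOn (fun j => (dataPosition (2 * k + 4) j + b) % C.length)
    (fun j _ => mem_range.2 (Nat.mod_lt _ (by omega))) (fun j hj j' hj' heq => ?_)
    (fun j hj => (getD_drop_append_take C _ hb (hpos j (mem_range.1 hj))).symm)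
    (fun j hj => hV j (mem_range.1 hj))
  exact dataPosition_injective ((Nat.ModEq.add_right_cancel' b heq).eq_of_lt_of_lt
    (hpos j (mem_range.1 hj)) (hpos j' (mem_range.1 hj')))

lemma IsApproxSeed.exists_occurrence {k t : ℕ} {C T : List Bool} (h : IsApproxSeed k C T)
    (ht : t < T.length) (hleft : C.length ≤ t + 1) (hright : t + C.length ≤ T.length) :
    ∃ i ≤ t, t < i + C.length ∧ mismatches (range C.length) (fun x => C.getD x false)
      (fun x => T.getD (i + x) false) ≤ k := by
  obtain ⟨-, _, ⟨A, B, rfl⟩, hlen, hcover⟩ := h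
  simp only [List.length_append] at hlen hcover
  obtain ⟨i, hi, hham, hit, hti⟩ := hcover (A.length + t) (by omega)
  refine ⟨i - A.length, by omega, by omega, ?_⟩
  rw [ham_eq_mismatches (by
    simp only [List.length_take, List.length_drop, List.length_append]
    omega)] at hham
  refine (mismatches_congr (fun _ _ => rfl) fun x hx => ?_).trans_le hham
  have hx := mem_range.1 hx
  simp only [List.getD_eq_getElem?_getD]
  rw [List.getElem?_take_of_lt hx, List.getElem?_drop, List.getElem?_append_left
    (by rw [List.length_append]; omega), List.getElem?_append_right (by omega)]
  congr 2
  omega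

end Strings

section SeedText

/-- The text `γ(A₁) ⋯ γ(A_n) · V · V` with `V = γ(S) · 1^{2k+4}`: the string `T'` of the theorem,
for `A = S_1, S_1, S_2, …, S_{m-1}` and `S = S_m`. -/
def seedText (k : ℕ) (A : List (List Bool)) (S : List Bool) : List Bool :=
  (A.map (gamma k)).flatten ++ (gamma k S ++ List.replicate (2 * k + 4) true ++
    (gamma k S ++ List.replicate (2 * k + 4) true))

variable {k ℓ : ℕ} {A : List (List Bool)} {S : List Bool}

lemma length_flatten_map_gamma (hA : ∀ S ∈ A, S.length = ℓ) :
    (A.map (gamma k)).flatten.length = A.length * gammaLen (2 * k + 4) ℓ := by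
  rw [length_flatten_of_length_eq (List.forall_mem_map.2 fun S hS => by rw [length_gamma, hA S hS]),
    List.length_map]

lemma length_seedText (hA : ∀ S ∈ A, S.length = ℓ) (hS : S.length = ℓ) :
    (seedText k A S).length =
      A.length * gammaLen (2 * k + 4) ℓ + 2 * seedLen (2 * k + 4) ℓ := by
  simp only [seedText, List.length_append, length_flatten_map_gamma hA, length_gamma, hS,
    List.length_replicate]
  omega

lemma getD_seedText_eq_textWord (hA : ∀ S ∈ A, S.length = ℓ) (hS : S.length = ℓ) {p : ℕ}
    (hp : p < (A.length + 1) * gammaLen (2 * k + 4) ℓ) :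
    (seedText k A S).getD p false =
      textWord (2 * k + 4) ℓ (fun q j => ((A ++ [S]).getD q []).getD j false) p := by
  have hAS : ∀ S' ∈ A ++ [S], S'.length = ℓ := List.forall_mem_append.2 ⟨hA, by simpa using hS⟩
  have hsplit : seedText k A S = ((A ++ [S]).map (gamma k)).flatten ++
      (List.replicate (2 * k + 4) true ++ (gamma k S ++ List.replicate (2 * k + 4) true)) := by
    simp [seedText]
  rw [hsplit, List.getD_append, getD_flatten_map_gamma hAS (by simpa using hp)]
  rwa [length_flatten_map_gamma hAS, List.length_append]

lemma getD_seedText_periodic (hA : ∀ S ∈ A, S.length = ℓ) (hS : S.length = ℓ) {x : ℕ}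
    (hx : x < 2 * seedLen (2 * k + 4) ℓ) :
    (seedText k A S).getD (A.length * gammaLen (2 * k + 4) ℓ + x) false =
      paddedWord (2 * k + 4) (2 * k + 4) ℓ (fun j => S.getD j false)
        (x % seedLen (2 * k + 4) ℓ) := by
  have hV : (gamma k S ++ List.replicate (2 * k + 4) true).length = seedLen (2 * k + 4) ℓ := by
    rw [List.length_append, length_gamma, List.length_replicate, hS]
    omega
  have hletter := getD_gamma_append_ones (k := k) (S := S) (x := x % seedLen (2 * k + 4) ℓ)
    (by rw [hS]; exact Nat.mod_lt _ (by omega))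
  rw [hS] at hletter
  rw [seedText, List.getD_append_right _ _ _ _ (by rw [length_flatten_map_gamma hA]; omega),
    length_flatten_map_gamma hA, Nat.add_sub_cancel_left, ← hletter]
  rcases mod_add_eq_or_of_lt_two_mul hx with ⟨hlt, hmod⟩ | ⟨hge, hmod⟩
  · rw [List.getD_append _ _ _ _ (by omega), hmod]
  · rw [List.getD_append_right _ _ _ _ (by omega), hV, ← Nat.sub_eq_of_eq_add hmod.symm]

lemma IsApproxSeed.exists_last_occurrence {C : List Bool}
    (hseed : IsApproxSeed k C (seedText k A S)) (hA : ∀ S ∈ A, S.length = ℓ)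
    (hS : S.length = ℓ) (hC : C.length = seedLen (2 * k + 4) ℓ) :
    ∃ s < seedLen (2 * k + 4) ℓ, mismatches (range (seedLen (2 * k + 4) ℓ))
      (fun x => C.getD x false)
      (fun y => paddedWord (2 * k + 4) (2 * k + 4) ℓ (fun j => S.getD j false)
        ((s + y) % seedLen (2 * k + 4) ℓ)) ≤ k := by
  have hT := length_seedText (k := k) hA hS
  obtain ⟨i, hle, hlt, hclose⟩ := hseed.exists_occurrence
    (t := A.length * gammaLen (2 * k + 4) ℓ + seedLen (2 * k + 4) ℓ - 1) (by omega) (by omega)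
    (by omega)
  obtain ⟨s, rfl⟩ : ∃ s, i = A.length * gammaLen (2 * k + 4) ℓ + s :=
    Nat.exists_eq_add_of_le (by omega)
  refine ⟨s, by omega, (mismatches_congr (fun _ _ => rfl) fun y hy => ?_).trans_le (hC ▸ hclose)⟩
  have := mem_range.1 hy
  rw [add_assoc, getD_seedText_periodic hA hS (by omega)]

lemma IsApproxSeed.exists_occurrence_at {C : List Bool} (hseed : IsApproxSeed k C (seedText k A S))
    (hA : ∀ S ∈ A, S.length = ℓ) (hS : S.length = ℓ) (hC : C.length = seedLen (2 * k + 4) ℓ)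
    (hℓ : 0 < ℓ) {q : ℕ} (hq : 0 < q) (hqA : q < A.length) :
    ∃ i ≤ q * gammaLen (2 * k + 4) ℓ + 2 * (2 * k + 4),
      q * gammaLen (2 * k + 4) ℓ + 2 * (2 * k + 4) < i + seedLen (2 * k + 4) ℓ ∧
      mismatches (range (seedLen (2 * k + 4) ℓ)) (fun x => C.getD x false)
        (fun y => textWord (2 * k + 4) ℓ (fun q j => ((A ++ [S]).getD q []).getD j false) (i + y))
          ≤ k := by
  have hT := length_seedText (k := k) hA hS
  have hblock : blockLen (2 * k + 4) ≤ ℓ * blockLen (2 * k + 4) := Nat.le_mul_of_pos_left _ hℓ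
  have hone : gammaLen (2 * k + 4) ℓ ≤ q * gammaLen (2 * k + 4) ℓ := Nat.le_mul_of_pos_left _ hq
  have hnext : (q + 1) * gammaLen (2 * k + 4) ℓ ≤ A.length * gammaLen (2 * k + 4) ℓ :=
    Nat.mul_le_mul_right _ hqA
  rw [Nat.add_one_mul] at hnext
  obtain ⟨i, hle, hlt, hclose⟩ := hseed.exists_occurrence
    (t := q * gammaLen (2 * k + 4) ℓ + 2 * (2 * k + 4)) (by omega) (by omega) (by omega)
  refine ⟨i, hle, by omega, (mismatches_congr (fun _ _ => rfl) fun y hy => ?_).trans_le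
    (hC ▸ hclose)⟩
  have := mem_range.1 hy
  rw [getD_seedText_eq_textWord hA hS (by rw [Nat.add_one_mul A.length]; omega)]

lemma IsApproxSeed.exists_rotation {C S₀ : List Bool} {B : List (List Bool)}
    (hseed : IsApproxSeed k C (seedText k (S₀ :: B) S)) (hA : ∀ S ∈ S₀ :: B, S.length = ℓ)
    (hS : S.length = ℓ) (hC : C.length = seedLen (2 * k + 4) ℓ) (hkℓ : k < ℓ) :
    ∃ b < C.length, ∀ S' ∈ B ++ [S], ham (psi k ℓ (C.drop b ++ C.take b)) S' ≤ k := by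
  obtain ⟨s, hs, hlast⟩ := hseed.exists_last_occurrence hA hS hC
  obtain ⟨b, hb, hsb⟩ := exists_dvd_add hs
  rw [← hC] at hb
  refine ⟨b, hb, List.forall_mem_append.2 ⟨fun S' hS' => ?_, List.forall_mem_singleton.2 ?_⟩⟩
  · obtain ⟨e, he, rfl⟩ := List.getElem_of_mem hS'
    obtain ⟨i, hle, hlt, hclose⟩ := hseed.exists_occurrence_at hA hS hC (q := e + 1)
      (by omega) (by omega) (by simpa using he)
    refine (ham_psi_rotate_le hC hb.le (hA _ (by simp)) fun j hj => ?_).trans (hC ▸ hclose)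
    rw [hC, textWord_dataPosition_of_close (by omega) hkℓ hs hsb hlast hclose hle hlt hj,
      List.cons_append, List.getD_cons_succ, List.getD_append _ _ _ _ he,
      List.getD_eq_getElem _ _ he]
  · refine (ham_psi_rotate_le hC hb.le hS fun j hj => ?_).trans (hC ▸ hlast)
    have hpos := dataPosition_lt (N := 2 * k + 4) hj
    obtain ⟨d, hd⟩ := hsb
    rw [hC, Nat.add_mod_mod, show s + (dataPosition (2 * k + 4) j + b) =
      dataPosition (2 * k + 4) j + seedLen (2 * k + 4) ℓ * d by omega,
      Nat.add_mul_mod_self_left, Nat.mod_eq_of_lt (by omega), paddedWord_dataPosition _ hj]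

end SeedText

theorem stmt10_general (k ℓ : ℕ) (S₀ : List Bool) (hS₀ : S₀.length = ℓ) (Ss : List (List Bool))
    (hlen : ∀ Si ∈ Ss, Si.length = ℓ) (hne : Ss ≠ []) (C : List Bool)
    (hC : C.length = (gamma k S₀).length + 2 * k + 4)
    (hseed : IsApproxSeed k C (gamma k S₀ ++ (Ss.map (gamma k)).flatten ++
      List.replicate (2 * k + 4) true ++ gamma k (Ss.getLast hne) ++
      List.replicate (2 * k + 4) true)) :
    ∃ b < C.length, ∀ Si ∈ Ss, ham (psi k ℓ (C.drop b ++ C.take b)) Si ≤ k := by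
  rcases Nat.lt_or_ge k ℓ with hkℓ | hℓk
  · obtain ⟨B, S, rfl⟩ : ∃ B S, Ss = B ++ [S] := ⟨_, _, (List.dropLast_append_getLast hne).symm⟩
    have hA : ∀ S ∈ S₀ :: B, S.length = ℓ :=
      List.forall_mem_cons.2 ⟨hS₀, fun S hS => hlen S (List.mem_append_left _ hS)⟩
    have hT : gamma k S₀ ++ ((B ++ [S]).map (gamma k)).flatten ++ List.replicate (2 * k + 4) true ++
        gamma k ((B ++ [S]).getLast hne) ++ List.replicate (2 * k + 4) true =
        seedText k (S₀ :: B) S := by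
      simp [seedText]
    rw [hT] at hseed
    rw [length_gamma, hS₀] at hC
    exact hseed.exists_rotation hA (hlen S (by simp)) (by omega) hkℓ
  · exact ⟨0, by omega, fun Si hSi => (ham_psi_le _ (hlen Si hSi)).trans hℓk⟩

theorem stmt10 (k ℓ m : ℕ) (hm : 1 ≤ m) (hℓ : 1 ≤ ℓ)
    (Ss : List (List Bool)) (hSs : Ss.length = m)
    (hlen : ∀ Si ∈ Ss, Si.length = ℓ)
    (hne : Ss ≠ [])
    (T' : List Bool)
    (hT' : T' = gamma k (Ss.head hne) ++ (Ss.map (gamma k)).flatten ++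
      List.replicate (2 * k + 4) true ++ gamma k (Ss.getLast hne) ++
      List.replicate (2 * k + 4) true)
    (c : ℕ) (hc : c = (gamma k (Ss.head hne)).length + 2 * k + 4)
    (C : List Bool) (hC : C.length = c)
    (hseed : IsApproxSeed k C T') :
    ∃ b, b < c ∧ ∀ Si ∈ Ss, ham (psi k ℓ (C.drop b ++ C.take b)) Si ≤ k := by
  subst hT' hc
  exact hC ▸ stmt10_general k ℓ _ (hlen _ (List.head_mem hne)) Ss hlen hne C hC hseed
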